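/- Let K = ℚ(√7). The natural map 𝒪_K^×/(𝒪_K^×)^8 → ∏_v K_v^×/(K_v^×)^8, where the product runs over all places v of K, is not injective: the unit u = 32257 + 12192√7 of 𝒪_K = ℤ[√7] is an 8th power in the completion K_v for every place v of K, but u is not an 8th power in K. -/

import Mathlib

open IsDedekindDomain NumberField

section Setup

variable (K : Type*) [Field K] [NumberField K]

/-- The places of the number field `K`: the finite places (nonzero prime ideals of `𝒪_K`)
together with the infinite places. -/
def NFPlace := HeightOneSpectrum (𝓞 K) ⊕ InfinitePlace K

/-- The completion of `K` at a place. -/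
noncomputable def placeCompletion : NFPlace K → Type _
  | .inl v => v.adicCompletion K
  | .inr w => w.Completion

noncomputable instance (v : NFPlace K) : Field (placeCompletion K v) := by
  cases v with
  | inl v => exact inferInstanceAs (Field (v.adicCompletion K))
  | inr w => exact inferInstanceAs (Field w.Completion)

noncomputable instance (v : NFPlace K) : Algebra K (placeCompletion K v) := by
  cases v with
  | inl v => exact inferInstanceAs (Algebra K (v.adicCompletion K))
  | inr w => exact inferInstanceAs (Algebra K w.Completion)

/-- The natural map `𝒪_K^×/(𝒪_K^×)^8 → ∏_v K_v^×/(K_v^×)^8`, the product being over all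
places of `K`. -/
noncomputable def globalToLocalEighthPowers :
    ((𝓞 K)ˣ ⧸ (powMonoidHom 8 : (𝓞 K)ˣ →* (𝓞 K)ˣ).range) →*
      ∀ v : NFPlace K,
        (placeCompletion K v)ˣ ⧸
          (powMonoidHom 8 : (placeCompletion K v)ˣ →* (placeCompletion K v)ˣ).range :=
  QuotientGroup.lift
    (M := ∀ v : NFPlace K,
        (placeCompletion K v)ˣ ⧸
          (powMonoidHom 8 : (placeCompletion K v)ˣ →* (placeCompletion K v)ˣ).range) _
    (Pi.monoidHom fun v =>
      (QuotientGroup.mk' _).comp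
        ((Units.map (algebraMap K (placeCompletion K v)).toMonoidHom).comp
          (Units.map (algebraMap (𝓞 K) K).toMonoidHom)))
    (by
      rintro x ⟨u, rfl⟩
      rw [MonoidHom.mem_ker]
      ext v
      refine (QuotientGroup.eq_one_iff _).mpr ?_
      refine ⟨((Units.map (algebraMap K (placeCompletion K v)).toMonoidHom).comp
          (Units.map (algebraMap (𝓞 K) K).toMonoidHom)) u, ?_⟩
      rw [powMonoidHom_apply, powMonoidHom_apply, ← map_pow])

end Setup

/-!
The unit is `u = ε ^ 4` with `ε = 8 + 3 * √7`, and `(3 + √7) ^ 2 = 2 * ε`, so that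
`16 * u = (3 + √7) ^ 8`. Hence `u` and Wang's number `16` are eighth powers in the same extensions
of `K`. Since `X ^ 8 - 16 = ((X - 1) ^ 2 + 1) * ((X + 1) ^ 2 + 1) * (X ^ 2 - 2) * (X ^ 2 + 2)`,
the number `16` is an eighth power in a field exactly when one of `-1`, `2`, `-2` is a square there.

None of the three is a square in `ℚ(√7)`, because neither it nor its product with `7` is a rational
square. At a finite place not above `2`, one of them is a square in the residue field and Hensel's
lemma lifts the root; at an infinite place, `2` is a square. At a place above `2`, the number
`-7 = 1 - 2 ^ 3` is close enough to `1` to be a square, and so is `7 = √7 ^ 2`; hence their quotient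
`-1` is a square.
-/

section PowerQuotients

theorem mem_range_powMonoidHom_units_iff {M : Type*} [CommMonoid M] {n : ℕ} (hn : n ≠ 0)
    (u : Mˣ) : u ∈ (powMonoidHom n : Mˣ →* Mˣ).range ↔ ∃ y : M, y ^ n = u := by
  constructor
  · rintro ⟨w, rfl⟩
    exact ⟨w, by simp⟩
  · rintro ⟨y, hy⟩
    obtain ⟨w, rfl⟩ := (isUnit_pow_iff hn).mp (hy ▸ u.isUnit)
    exact ⟨w, Units.ext (by simpa using hy)⟩

variable {K : Type*} [Field K] [NumberField K]

theorem globalToLocalEighthPowers_mk_eq_one_iff (u : (𝓞 K)ˣ) :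
    globalToLocalEighthPowers K (QuotientGroup.mk u) = 1 ↔
      ∀ v : NFPlace K, ∃ y : placeCompletion K v,
        y ^ 8 = algebraMap K (placeCompletion K v) (algebraMap (𝓞 K) K (u : 𝓞 K)) := by
  rw [funext_iff]
  exact forall_congr' fun v ↦ (QuotientGroup.eq_one_iff _).trans
    (mem_range_powMonoidHom_units_iff (by norm_num) _)

theorem not_injective_globalToLocalEighthPowers {u : (𝓞 K)ˣ}
    (hlocal : ∀ v : NFPlace K, ∃ y : placeCompletion K v,
      y ^ 8 = algebraMap K (placeCompletion K v) (algebraMap (𝓞 K) K (u : 𝓞 K)))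
    (hglobal : ¬ ∃ y : K, y ^ 8 = algebraMap (𝓞 K) K (u : 𝓞 K)) :
    ¬ Function.Injective (globalToLocalEighthPowers K) := by
  intro hinj
  have hmk := (injective_iff_map_eq_one _).mp hinj _
    ((globalToLocalEighthPowers_mk_eq_one_iff u).mpr hlocal)
  obtain ⟨y, hy⟩ := (mem_range_powMonoidHom_units_iff (by norm_num) u).mp
    ((QuotientGroup.eq_one_iff u).mp hmk)
  exact hglobal ⟨algebraMap (𝓞 K) K y, by rw [← map_pow, hy]⟩

end PowerQuotients

section EighthPowers

theorem exists_pow_eight_eq_sixteen_iff {R : Type*} [CommRing R] [IsDomain R] :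
    (∃ s : R, s ^ 8 = 16) ↔ IsSquare (-1 : R) ∨ IsSquare (2 : R) ∨ IsSquare (-2 : R) := by
  simp only [isSquare_iff_exists_sq]
  constructor
  · rintro ⟨s, hs⟩
    have hfactor : ((s - 1) ^ 2 + 1) * ((s + 1) ^ 2 + 1) * (s ^ 2 - 2) * (s ^ 2 + 2) = 0 := by
      linear_combination hs
    rcases mul_eq_zero.mp hfactor with h | h
    · rcases mul_eq_zero.mp h with h | h
      · rcases mul_eq_zero.mp h with h | h
        · exact .inl ⟨s - 1, by linear_combination -h⟩
        · exact .inl ⟨s + 1, by linear_combination -h⟩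
      · exact .inr (.inl ⟨s, by linear_combination -h⟩)
    · exact .inr (.inr ⟨s, by linear_combination -h⟩)
  · rintro (⟨i, hi⟩ | ⟨s, hs⟩ | ⟨s, hs⟩)
    · have hsq : (1 + i) ^ 2 = 2 * i := by linear_combination -hi
      refine ⟨1 + i, ?_⟩
      calc (1 + i) ^ 8 = ((1 + i) ^ 2) ^ 4 := by ring
        _ = 16 * (i ^ 2) ^ 2 := by rw [hsq]; ring
        _ = 16 := by rw [← hi]; ring
    · exact ⟨s, by rw [show s ^ 8 = (s ^ 2) ^ 4 by ring, ← hs]; norm_num⟩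
    · exact ⟨s, by rw [show s ^ 8 = (s ^ 2) ^ 4 by ring, ← hs]; norm_num⟩

theorem exists_pow_eq_of_mul_eq_pow {G : Type*} [CommGroupWithZero G] {a b c : G} {n : ℕ}
    (ha : a ≠ 0) (h : b * c = a ^ n) (hb : ∃ y, y ^ n = b) : ∃ y, y ^ n = c := by
  obtain ⟨y, rfl⟩ := hb
  have hy : y ^ n ≠ 0 := left_ne_zero_of_mul (h ▸ pow_ne_zero n ha)
  exact ⟨a / y, by rw [div_pow, ← h, mul_div_cancel_left₀ c hy]⟩

theorem exists_pow_eq_iff_of_mul_eq_pow {G : Type*} [CommGroupWithZero G] {a b c : G} {n : ℕ}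
    (ha : a ≠ 0) (h : b * c = a ^ n) : (∃ y, y ^ n = b) ↔ ∃ y, y ^ n = c :=
  ⟨exists_pow_eq_of_mul_eq_pow ha h, exists_pow_eq_of_mul_eq_pow ha (mul_comm b c ▸ h)⟩

end EighthPowers

section SqrtSeven

variable {R : Type*} [CommRing R] {θ : R}

theorem eight_add_three_mul_pow_four (hθ : θ ^ 2 = 7) :
    (8 + 3 * θ) ^ 4 = 32257 + 12192 * θ := by
  have hsq : (8 + 3 * θ) ^ 2 = 127 + 48 * θ := by linear_combination 9 * hθ
  rw [show (8 + 3 * θ) ^ 4 = ((8 + 3 * θ) ^ 2) ^ 2 by ring, hsq]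
  linear_combination 48 ^ 2 * hθ

theorem isUnit_eight_add_three_mul (hθ : θ ^ 2 = 7) : IsUnit (8 + 3 * θ) :=
  .of_mul_eq_one (8 - 3 * θ) (by linear_combination -9 * hθ)

theorem sixteen_mul_eq_three_add_pow_eight (hθ : θ ^ 2 = 7) :
    16 * (32257 + 12192 * θ) = (3 + θ) ^ 8 := by
  have hsq : (3 + θ) ^ 2 = 2 * (8 + 3 * θ) := by linear_combination hθ
  calc 16 * (32257 + 12192 * θ) = (2 * (8 + 3 * θ)) ^ 4 := by
        rw [← eight_add_three_mul_pow_four hθ]; ring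
    _ = (3 + θ) ^ 8 := by rw [← hsq]; ring

theorem exists_pow_eight_eq_iff_of_sq_eq_seven {L : Type*} [Field L] [NeZero (2 : L)] {θ : L}
    (hθ : θ ^ 2 = 7) : (∃ y : L, y ^ 8 = 32257 + 12192 * θ) ↔ ∃ s : L, s ^ 8 = 16 := by
  have hne : 3 + θ ≠ 0 := by
    intro h
    exact two_ne_zero (α := L) (by linear_combination (3 - θ) * h + hθ)
  exact (exists_pow_eq_iff_of_mul_eq_pow hne (sixteen_mul_eq_three_add_pow_eight hθ)).symm

theorem exists_units_ringOfIntegers_of_sq_eq_seven {K : Type*} [Field K] {θ : K} (hθ : θ ^ 2 = 7) :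
    ∃ u : (𝓞 K)ˣ, algebraMap (𝓞 K) K (u : 𝓞 K) = 32257 + 12192 * θ := by
  have hint : IsIntegral ℤ θ :=
    .of_pow two_pos (by simpa [hθ] using isIntegral_algebraMap (R := ℤ) (A := K) (x := 7))
  let t : 𝓞 K := ⟨θ, hint⟩
  have ht : t ^ 2 = 7 := FaithfulSMul.algebraMap_injective (𝓞 K) K <| by
    rw [map_pow, map_ofNat (algebraMap (𝓞 K) K) 7]
    exact hθ
  obtain ⟨ε, hε⟩ := isUnit_eight_add_three_mul ht
  refine ⟨ε ^ 4, ?_⟩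
  rw [Units.val_pow_eq_pow_val, hε, eight_add_three_mul_pow_four ht, map_add, map_mul,
    map_ofNat (algebraMap (𝓞 K) K) 32257, map_ofNat (algebraMap (𝓞 K) K) 12192]
  rfl

end SqrtSeven

section QuadraticExtensions

theorem exists_eq_add_mul_of_mem_adjoin_of_sq_eq {R A : Type*} [CommSemiring R] [CommSemiring A]
    [Algebra R A] {θ : A} {d : R} (hθ : θ ^ 2 = algebraMap R A d) {x : A}
    (hx : x ∈ Algebra.adjoin R {θ}) : ∃ a b : R, x = algebraMap R A a + algebraMap R A b * θ := by
  induction hx using Algebra.adjoin_induction with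
  | mem x hx => exact ⟨0, 1, by simpa using hx⟩
  | algebraMap r => exact ⟨r, 0, by simp⟩
  | add x y _ _ hx hy =>
    obtain ⟨a, b, rfl⟩ := hx
    obtain ⟨a', b', rfl⟩ := hy
    exact ⟨a + a', b + b', by simp only [map_add]; ring⟩
  | mul x y _ _ hx hy =>
    obtain ⟨a, b, rfl⟩ := hx
    obtain ⟨a', b', rfl⟩ := hy
    refine ⟨a * a' + b * b' * d, a * b' + b * a', ?_⟩
    simp only [map_add, map_mul, ← hθ]
    ring

theorem isSquare_or_isSquare_mul_of_isSquare_algebraMap {F K : Type*} [Field F] [NeZero (2 : F)]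
    [Field K] [Algebra F K] {θ : K} {c d : F} (hθ : θ ^ 2 = algebraMap F K d)
    (hgen : Algebra.adjoin F {θ} = ⊤) (hc : IsSquare (algebraMap F K c)) :
    IsSquare c ∨ IsSquare (c * d) := by
  have hinj := (algebraMap F K).injective
  obtain ⟨x, hx⟩ := isSquare_iff_exists_sq _ |>.mp hc
  obtain ⟨a, b, rfl⟩ := exists_eq_add_mul_of_mem_adjoin_of_sq_eq hθ (hgen ▸ Algebra.mem_top : x ∈ _)
  have hexpand : algebraMap F K (2 * a * b) * θ = algebraMap F K (c - a ^ 2 - b ^ 2 * d) := by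
    simp only [map_sub, map_mul, map_pow, map_ofNat, hx, ← hθ]
    ring
  by_cases hab : 2 * a * b = 0
  · have hcd : c = a ^ 2 + b ^ 2 * d := by
      have hzero : c - a ^ 2 - b ^ 2 * d = 0 := by
        rwa [hab, map_zero, zero_mul, eq_comm, map_eq_zero] at hexpand
      linear_combination hzero
    rcases mul_eq_zero.mp hab with h | rfl
    · obtain rfl : a = 0 := (mul_eq_zero.mp h).resolve_left two_ne_zero
      exact .inr ⟨b * d, by rw [hcd]; ring⟩
    · exact .inl ⟨a, by rw [hcd]; ring⟩
  · obtain ⟨e, rfl⟩ : ∃ e, algebraMap F K e = θ := by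
      refine ⟨(c - a ^ 2 - b ^ 2 * d) / (2 * a * b), ?_⟩
      rw [map_div₀, ← hexpand, mul_div_cancel_left₀ _ (by simpa using hab)]
    exact .inl ((isSquare_iff_exists_sq c).mpr ⟨a + b * e, hinj (by simpa using hx)⟩)

theorem not_exists_pow_eight_eq_sixteen_of_adjoin_sqrt_seven {K : Type*} [Field K] [Algebra ℚ K]
    {θ : K} (hθ : θ ^ 2 = 7) (hgen : Algebra.adjoin ℚ {θ} = ⊤) : ¬ ∃ s : K, s ^ 8 = 16 := by
  have hnonsquare (c : ℚ) (hc : ¬ IsSquare c) (hc7 : ¬ IsSquare (c * 7)) :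
      ¬ IsSquare (algebraMap ℚ K c) := fun h ↦
    (isSquare_or_isSquare_mul_of_isSquare_algebraMap (by simpa using hθ) hgen h).elim hc hc7
  rw [exists_pow_eight_eq_sixteen_iff]
  rintro (h | h | h)
  · exact hnonsquare (-1) (by norm_num) (by norm_num) (by simpa using h)
  · exact hnonsquare 2 (by norm_num) (by norm_num) (by simpa using h)
  · exact hnonsquare (-2) (by norm_num) (by norm_num) (by simpa using h)

end QuadraticExtensions

section Hensel

variable {L : Type*} [NormedField L] [CompleteSpace L] [IsUltrametricDist L]

theorem exists_sq_add_self_add_eq_zero_of_norm_lt_one {c : L} (hc : ‖c‖ < 1) :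
    ∃ t : L, t ^ 2 + t + c = 0 := by
  let f : L → L := fun t ↦ -(c + t ^ 2)
  let s : Set L := Metric.closedBall 0 ‖c‖
  have norm_le {t : L} (ht : t ∈ s) : ‖t‖ ≤ ‖c‖ := by simpa [s] using ht
  have hmaps : Set.MapsTo f s s := by
    intro t ht
    have hsq : ‖t ^ 2‖ ≤ ‖c‖ := by
      rw [norm_pow]
      exact (pow_le_of_le_one (norm_nonneg t) ((norm_le ht).trans hc.le) two_ne_zero).trans
        (norm_le ht)
    rw [mem_closedBall_zero_iff, norm_neg]
    exact (IsUltrametricDist.norm_add_le_max c (t ^ 2)).trans (max_le le_rfl hsq)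
  have hcontract : ContractingWith ‖c‖₊ (hmaps.restrict f s s) := by
    refine ⟨mod_cast hc, LipschitzWith.of_dist_le_mul ?_⟩
    rintro ⟨x, hx⟩ ⟨y, hy⟩
    have hdiff : f x - f y = -(x + y) * (x - y) := by simp only [f]; ring
    simp only [Subtype.dist_eq, Set.MapsTo.val_restrict_apply, dist_eq_norm, hdiff, norm_mul,
      norm_neg, coe_nnnorm]
    gcongr
    exact (IsUltrametricDist.norm_add_le_max x y).trans (max_le (norm_le hx) (norm_le hy))
  obtain ⟨t, -, ht, -⟩ := hcontract.exists_fixedPoint' Metric.isClosed_closedBall.isComplete hmaps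
    (x := 0) (by simp [s]) (edist_ne_top _ _)
  have hfixed : -(c + t ^ 2) = t := ht
  exact ⟨t, by linear_combination -hfixed⟩

-- A root `b + 2 * b * t` of `X ^ 2 - a` amounts to `t ^ 2 + t + (b ^ 2 - a) / (2 * b) ^ 2 = 0`.
theorem isSquare_of_norm_sq_sub_lt {a b : L} (h : ‖b ^ 2 - a‖ < ‖2 * b‖ ^ 2) : IsSquare a := by
  have hb : (2 * b) ^ 2 ≠ 0 := by
    rw [← norm_pos_iff, norm_pow]
    exact (norm_nonneg _).trans_lt h
  obtain ⟨t, ht⟩ := exists_sq_add_self_add_eq_zero_of_norm_lt_one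
    (c := (b ^ 2 - a) / (2 * b) ^ 2)
    (by rwa [norm_div, norm_pow, div_lt_one ((norm_nonneg _).trans_lt h)])
  have hcancel : (2 * b) ^ 2 * ((b ^ 2 - a) / (2 * b) ^ 2) = b ^ 2 - a := mul_div_cancel₀ _ hb
  exact (isSquare_iff_exists_sq a).mpr
    ⟨b + 2 * b * t, by linear_combination hcancel - (2 * b) ^ 2 * ht⟩

theorem isSquare_neg_seven_of_norm_two_lt_one [NeZero (2 : L)] (h2 : ‖(2 : L)‖ < 1) :
    IsSquare (-7 : L) := by
  refine isSquare_of_norm_sq_sub_lt (b := 1) ?_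
  rw [show (1 : L) ^ 2 - -7 = 2 ^ 3 by norm_num, mul_one, norm_pow]
  exact pow_lt_pow_right_of_lt_one₀ (norm_pos_iff.mpr two_ne_zero) h2 (by norm_num)

end Hensel

section FinitePlaces

theorem isSquare_neg_one_or_two_or_neg_two_of_finite (F : Type*) [Field F] [Finite F] :
    IsSquare (-1 : F) ∨ IsSquare (2 : F) ∨ IsSquare (-2 : F) := by
  have := Fintype.ofFinite F
  rw [FiniteField.isSquare_neg_one_iff, FiniteField.isSquare_two_iff,
    FiniteField.isSquare_neg_two_iff]
  lia

variable {K : Type*} [Field K] {R : Type*} [CommRing R] [Algebra R K] [IsDedekindDomain R]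
  [IsFractionRing R K] [Module.Finite ℤ R] [Module.Free ℤ R] (v : HeightOneSpectrum R)

instance isUltrametricDist_adicCompletion : IsUltrametricDist (v.adicCompletion K) :=
  Valued.instIsUltrametricDist _ (WithZero (Multiplicative ℤ))

theorem norm_algebraMap_adicCompletion_lt_one_iff (a : R) :
    ‖algebraMap R (v.adicCompletion K) a‖ < 1 ↔ a ∈ v.asIdeal :=
  FinitePlace.norm_lt_one_iff_mem K v a

theorem norm_algebraMap_adicCompletion_eq_one_iff (a : R) :
    ‖algebraMap R (v.adicCompletion K) a‖ = 1 ↔ a ∉ v.asIdeal :=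
  FinitePlace.norm_eq_one_iff_notMem K v a

variable {v}

theorem isSquare_algebraMap_adicCompletion_of_isSquare_quotient (h2 : 2 ∉ v.asIdeal) {a : R}
    (ha : a ∉ v.asIdeal) (hsq : IsSquare (Ideal.Quotient.mk v.asIdeal a)) :
    IsSquare (algebraMap R (v.adicCompletion K) a) := by
  obtain ⟨r, hr⟩ := (isSquare_iff_exists_sq _).mp hsq
  obtain ⟨b, rfl⟩ := Ideal.Quotient.mk_surjective r
  have hba : b ^ 2 - a ∈ v.asIdeal := by
    rw [← Ideal.Quotient.eq_zero_iff_mem, map_sub, map_pow, hr, sub_self]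
  have hb : b ∉ v.asIdeal := fun hb ↦
    ha (by simpa using v.asIdeal.sub_mem (v.asIdeal.pow_mem_of_mem hb 2 two_pos) hba)
  have h2b : ‖algebraMap R (v.adicCompletion K) (2 * b)‖ = 1 :=
    (norm_algebraMap_adicCompletion_eq_one_iff v _).mpr fun h ↦
      (v.isPrime.mem_or_mem h).elim h2 hb
  refine isSquare_of_norm_sq_sub_lt (b := algebraMap R (v.adicCompletion K) b) ?_
  rw [← map_pow, ← map_sub, ← map_ofNat (algebraMap R (v.adicCompletion K)) 2, ← map_mul, h2b,
    one_pow]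
  exact (norm_algebraMap_adicCompletion_lt_one_iff v _).mpr hba

theorem isSquare_intCast_adicCompletion_of_isSquare_quotient {n : ℤ} (h2 : 2 ∉ v.asIdeal)
    (hn : (n : R) ∉ v.asIdeal) (hsq : IsSquare (n : R ⧸ v.asIdeal)) :
    IsSquare (n : v.adicCompletion K) := by
  rw [← map_intCast (algebraMap R (v.adicCompletion K))]
  exact isSquare_algebraMap_adicCompletion_of_isSquare_quotient h2 hn
    (by rwa [map_intCast (Ideal.Quotient.mk v.asIdeal)])

theorem isSquare_neg_one_or_two_or_neg_two_adicCompletion (h2 : 2 ∉ v.asIdeal) :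
    IsSquare (-1 : v.adicCompletion K) ∨ IsSquare (2 : v.adicCompletion K) ∨
      IsSquare (-2 : v.adicCompletion K) := by
  have := v.isMaximal
  let := Ideal.Quotient.field v.asIdeal
  have : Finite (R ⧸ v.asIdeal) := Ideal.finiteQuotientOfFreeOfNeBot _ v.ne_bot
  have h1 : (-1 : R) ∉ v.asIdeal := by simpa using v.asIdeal.one_notMem
  have hneg2 : (-2 : R) ∉ v.asIdeal := by simpa using h2
  rcases isSquare_neg_one_or_two_or_neg_two_of_finite (R ⧸ v.asIdeal) with h | h | h
  · exact .inl <| mod_cast isSquare_intCast_adicCompletion_of_isSquare_quotient (n := -1) h2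
      (mod_cast h1) (mod_cast h)
  · exact .inr <| .inl <| mod_cast isSquare_intCast_adicCompletion_of_isSquare_quotient (n := 2) h2
      (mod_cast h2) (mod_cast h)
  · exact .inr <| .inr <| mod_cast isSquare_intCast_adicCompletion_of_isSquare_quotient (n := -2) h2
      (mod_cast hneg2) (mod_cast h)

theorem isSquare_neg_one_adicCompletion_of_two_mem [CharZero K] (h2 : 2 ∈ v.asIdeal)
    (h7 : IsSquare (7 : K)) : IsSquare (-1 : v.adicCompletion K) := by
  have : CharZero (v.adicCompletion K) :=
    charZero_of_injective_algebraMap (algebraMap K (v.adicCompletion K)).injective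
  have hnorm : ‖(2 : v.adicCompletion K)‖ < 1 := by
    rw [← map_ofNat (algebraMap R (v.adicCompletion K)) 2]
    exact (norm_algebraMap_adicCompletion_lt_one_iff v 2).mpr h2
  have hsq : IsSquare (7 : v.adicCompletion K) := by
    rw [← map_ofNat (algebraMap K (v.adicCompletion K)) 7]
    exact h7.map _
  simpa [neg_div] using (isSquare_neg_seven_of_norm_two_lt_one hnorm).div hsq

theorem exists_pow_eight_eq_sixteen_adicCompletion [CharZero K] (v : HeightOneSpectrum R)
    (h7 : IsSquare (7 : K)) : ∃ s : v.adicCompletion K, s ^ 8 = 16 := by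
  rw [exists_pow_eight_eq_sixteen_iff]
  by_cases h2 : 2 ∈ v.asIdeal
  · exact .inl (isSquare_neg_one_adicCompletion_of_two_mem h2 h7)
  · exact isSquare_neg_one_or_two_or_neg_two_adicCompletion h2

end FinitePlaces

section Places

theorem isSquare_natCast_infinitePlace_completion {K : Type*} [Field K] (w : InfinitePlace K)
    (n : ℕ) : IsSquare (n : w.Completion) := by
  rcases w.isReal_or_isComplex with hw | hw
  · simpa using (Real.isSquare_iff.mpr n.cast_nonneg).map
      (InfinitePlace.Completion.ringEquivRealOfIsReal hw).symm
  · simpa using (Complex.isSquare n).map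
      (InfinitePlace.Completion.ringEquivComplexOfIsComplex hw).symm

variable {K : Type*} [Field K] [NumberField K]

theorem exists_pow_eight_eq_sixteen_placeCompletion (h7 : IsSquare (7 : K)) (v : NFPlace K) :
    ∃ s : placeCompletion K v, s ^ 8 = 16 := by
  cases v with
  | inl v => exact exists_pow_eight_eq_sixteen_adicCompletion v h7
  | inr w =>
    have h2 : IsSquare (2 : w.Completion) := isSquare_natCast_infinitePlace_completion w 2
    exact exists_pow_eight_eq_sixteen_iff (R := w.Completion) |>.mpr (.inr (.inl h2))

theorem exists_pow_eight_eq_placeCompletion {θ : K} (hθ : θ ^ 2 = 7) (v : NFPlace K) :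
    ∃ y : placeCompletion K v,
      y ^ 8 = algebraMap K (placeCompletion K v) (32257 + 12192 * θ) := by
  have : CharZero (placeCompletion K v) :=
    charZero_of_injective_algebraMap (algebraMap K (placeCompletion K v)).injective
  have hθv : algebraMap K (placeCompletion K v) θ ^ 2 = 7 := by rw [← map_pow, hθ, map_ofNat]
  rw [map_add, map_mul, map_ofNat (algebraMap K (placeCompletion K v)) 32257,
    map_ofNat (algebraMap K (placeCompletion K v)) 12192]
  exact (exists_pow_eight_eq_iff_of_sq_eq_seven hθv).mpr
    (exists_pow_eight_eq_sixteen_placeCompletion ⟨θ, by rw [← hθ, sq]⟩ v)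

end Places

theorem stmt_8_general (K : Type*) [Field K] [NumberField K] (θ : K) (hθ : θ ^ 2 = 7)
    (h16 : ¬ ∃ s : K, s ^ 8 = 16) :
    ¬ Function.Injective (globalToLocalEighthPowers K) ∧
    ∃ u : (𝓞 K)ˣ,
      algebraMap (𝓞 K) K (u : 𝓞 K) = 32257 + 12192 * θ ∧
      (∀ v : NFPlace K, ∃ y : placeCompletion K v,
        y ^ 8 = algebraMap K (placeCompletion K v) (algebraMap (𝓞 K) K (u : 𝓞 K))) ∧
      ¬ ∃ y : K, y ^ 8 = algebraMap (𝓞 K) K (u : 𝓞 K) := by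
  obtain ⟨u, hu⟩ := exists_units_ringOfIntegers_of_sq_eq_seven hθ
  have hlocal (v : NFPlace K) : ∃ y : placeCompletion K v,
      y ^ 8 = algebraMap K (placeCompletion K v) (algebraMap (𝓞 K) K (u : 𝓞 K)) :=
    hu ▸ exists_pow_eight_eq_placeCompletion hθ v
  have hglobal : ¬ ∃ y : K, y ^ 8 = algebraMap (𝓞 K) K (u : 𝓞 K) := by
    rwa [hu, exists_pow_eight_eq_iff_of_sq_eq_seven hθ]
  exact ⟨not_injective_globalToLocalEighthPowers hlocal hglobal, u, hu, hlocal, hglobal⟩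

/-- Let `K = ℚ(√7)` (a field over `ℚ` generated by `θ` with `θ² = 7`). The
natural map `𝒪_K^×/(𝒪_K^×)^8 → ∏_v K_v^×/(K_v^×)^8`, the product over all places `v` of `K`,
is not injective: the unit `u = 32257 + 12192√7` of `𝒪_K` is an 8th power in the completion
`K_v` for every place `v` of `K`, but `u` is not an 8th power in `K`. -/
theorem stmt_8 (K : Type*) [Field K] [NumberField K] (θ : K) (hθ : θ ^ 2 = 7)
    (hgen : Algebra.adjoin ℚ {θ} = ⊤) :
    ¬ Function.Injective (globalToLocalEighthPowers K) ∧
    ∃ u : (𝓞 K)ˣ,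
      algebraMap (𝓞 K) K (u : 𝓞 K) = 32257 + 12192 * θ ∧
      (∀ v : NFPlace K, ∃ y : placeCompletion K v,
        y ^ 8 = algebraMap K (placeCompletion K v) (algebraMap (𝓞 K) K (u : 𝓞 K))) ∧
      ¬ ∃ y : K, y ^ 8 = algebraMap (𝓞 K) K (u : 𝓞 K) :=
  stmt_8_general K θ hθ (not_exists_pow_eight_eq_sixteen_of_adjoin_sqrt_seven hθ hgen)
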